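/- Let n ≥ 1, let 1 ≤ p, q ≤ ∞, s > 0, α > 0 and β > 0, and choose 1 ≤ p₁, p₂, p₃, p₄, q₁, q₂, q₃, q₄ ≤ ∞ so that 1/p = 1/p₁ + 1/p₂ = 1/p₃ + 1/p₄ and 1/q = 1/q₁ + 1/q₂ = 1/q₃ + 1/q₄. Then there exists a constant C > 0, depending only on n, s, α, β and these indices, such that for all Schwartz functions f₁, f₂ on ℝⁿ the inequality ‖f₁ · f₂‖_{Ḃ^s_{p,q}} ≤ C (‖f₁‖_{Ḃ^{s+α}_{p₁,q₁}} ‖f₂‖_{Ḃ^{-α}_{p₂,q₂}} + ‖f₁‖_{Ḃ^{-β}_{p₃,q₃}} ‖f₂‖_{Ḃ^{s+β}_{p₄,q₄}}) holds in [0,∞]. -/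

import Mathlib

open MeasureTheory Real Complex Filter Function
open scoped ENNReal FourierTransform SchwartzMap

noncomputable section

/-- The properties of the radial smooth cutoff `χ` used to build the
Littlewood–Paley decomposition: smooth, compactly supported, radial,
`0 ≤ χ ≤ 1`, `χ = 1` on `{‖ξ‖ ≤ 3/4}` and `χ = 0` on `{‖ξ‖ > 4/3}`. -/
def IsLPCutoff {n : ℕ} (χ : EuclideanSpace ℝ (Fin n) → ℝ) : Prop :=
  ContDiff ℝ ((⊤ : ℕ∞) : WithTop ℕ∞) χ ∧ HasCompactSupport χ ∧
    (∀ ξ η, ‖ξ‖ = ‖η‖ → χ ξ = χ η) ∧ (∀ ξ, 0 ≤ χ ξ) ∧ (∀ ξ, χ ξ ≤ 1) ∧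
    (∀ ξ, ‖ξ‖ ≤ 3 / 4 → χ ξ = 1) ∧ (∀ ξ, 4 / 3 < ‖ξ‖ → χ ξ = 0)

/-- The low-frequency Littlewood–Paley projection `S_j f = 𝓕⁻¹(χ(·/2^j) 𝓕 f)`. -/
def Sproj {n : ℕ} (χ : EuclideanSpace ℝ (Fin n) → ℝ) (j : ℤ)
    (f : EuclideanSpace ℝ (Fin n) → ℂ) : EuclideanSpace ℝ (Fin n) → ℂ :=
  𝓕⁻ fun ξ => ((χ ((2 : ℝ) ^ (-j) • ξ) : ℝ) : ℂ) * 𝓕 f ξ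

/-- The Littlewood–Paley block `Δ_j f = 𝓕⁻¹(φ̂(·/2^j) 𝓕 f)`, where
`φ̂(ξ) = χ(ξ/2) - χ(ξ)`, i.e. `φ̂(ξ/2^j) = χ(ξ/2^(j+1)) - χ(ξ/2^j)`. -/
def Dproj {n : ℕ} (χ : EuclideanSpace ℝ (Fin n) → ℝ) (j : ℤ)
    (f : EuclideanSpace ℝ (Fin n) → ℂ) : EuclideanSpace ℝ (Fin n) → ℂ :=
  𝓕⁻ fun ξ => ((χ ((2 : ℝ) ^ (-(j + 1)) • ξ) - χ ((2 : ℝ) ^ (-j) • ξ) : ℝ) : ℂ) * 𝓕 f ξ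

/-- The `ℓ^q(ℤ)` norm of a sequence of extended nonnegative reals, with the usual
supremum modification for `q = ∞`. -/
def lqNorm (q : ℝ≥0∞) (a : ℤ → ℝ≥0∞) : ℝ≥0∞ :=
  if q = ∞ then ⨆ j, a j else (∑' j, a j ^ q.toReal) ^ (1 / q.toReal)

/-- The homogeneous Besov norm `‖f‖_{Ḃ^s_{p,q}}`, valued in `[0,∞]`. -/
def besovNorm {n : ℕ} (χ : EuclideanSpace ℝ (Fin n) → ℝ) (s : ℝ) (p q : ℝ≥0∞)
    (f : EuclideanSpace ℝ (Fin n) → ℂ) : ℝ≥0∞ :=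
  lqNorm q fun j => (2 : ℝ≥0∞) ^ ((j : ℝ) * s) * eLpNorm (Dproj χ j f) p volume

/-!
Since `Δ_j` kills `S_{j-2}f · S_{j-2}g`, the block `Δ_j (f g)` only sees the telescoping sum of the
increments `S_{k+1}f · S_{k+1}g - S_k f · S_k g = Δ_k f · S_{k+1}g + S_k f · Δ_k g` over
`k ≥ j - 2`. Weighted by `2^{js}`, the `k`-th increment carries the factor `2^{(j-k)s}`, which is
summable in `k - j` because `s > 0`. In each increment the high-frequency factor has positive
regularity and the low-frequency factor negative regularity `-α` or `-β`; expanding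
`S_k = ∑_{i<k} Δ_i` bounds the latter by blocks with weights `2^{(i-k)α}`, again summable. Young's
inequality on `ℤ` absorbs both convolutions, and Hölder's inequality in `L^p` and `ℓ^q` separates
the two factors.
-/

section MinkowskiYoungHolder

variable {X Y : Type*} [MeasurableSpace X] [MeasurableSpace Y] {μ : Measure X} {ν : Measure Y}
  {p : ℝ≥0∞}

theorem lintegral_rpow_le_measure_univ_rpow_mul {r : ℝ} (hr : 1 ≤ r) {f : Y → ℝ≥0∞}
    (hf : AEMeasurable f ν) :
    (∫⁻ y, f y ∂ν) ^ r ≤ ν Set.univ ^ (r - 1) * ∫⁻ y, f y ^ r ∂ν := by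
  have hr₀ : 0 < r := by linarith
  have h := eLpNorm'_le_eLpNorm'_mul_rpow_measure_univ zero_lt_one hr hf.aestronglyMeasurable
  simp only [eLpNorm', enorm_eq_self, ENNReal.rpow_one, div_one] at h
  calc (∫⁻ y, f y ∂ν) ^ r
      ≤ ((∫⁻ y, f y ^ r ∂ν) ^ (1 / r) * ν Set.univ ^ (1 - 1 / r)) ^ r := by gcongr
    _ = ν Set.univ ^ (r - 1) * ∫⁻ y, f y ^ r ∂ν := by
      rw [ENNReal.mul_rpow_of_nonneg _ _ hr₀.le, ← ENNReal.rpow_mul, ← ENNReal.rpow_mul,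
        one_div_mul_cancel hr₀.ne', ENNReal.rpow_one, sub_mul, one_mul,
        one_div_mul_cancel hr₀.ne', mul_comm]

theorem lintegral_rpow_lintegral_le_measure_univ_rpow_mul [SFinite μ] [SFinite ν] {r : ℝ}
    (hr : 1 ≤ r) {F : X → Y → ℝ≥0∞} (hF : Measurable (uncurry F)) {M : ℝ≥0∞}
    (hM : ∀ y, ∫⁻ x, F x y ^ r ∂μ ≤ M) :
    ∫⁻ x, (∫⁻ y, F x y ∂ν) ^ r ∂μ ≤ ν Set.univ ^ r * M := by
  have hFr : Measurable (uncurry fun x y => F x y ^ r) := hF.pow_const r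
  calc ∫⁻ x, (∫⁻ y, F x y ∂ν) ^ r ∂μ
      ≤ ∫⁻ x, ν Set.univ ^ (r - 1) * ∫⁻ y, F x y ^ r ∂ν ∂μ :=
        lintegral_mono fun x => lintegral_rpow_le_measure_univ_rpow_mul hr
          (hF.comp measurable_prodMk_left).aemeasurable
    _ = ν Set.univ ^ (r - 1) * ∫⁻ y, ∫⁻ x, F x y ^ r ∂μ ∂ν := by
      rw [lintegral_const_mul _ hFr.lintegral_prod_right, lintegral_lintegral_swap hFr.aemeasurable]
    _ ≤ ν Set.univ ^ (r - 1) * ∫⁻ _, M ∂ν := by gcongr; exact hM _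
    _ = ν Set.univ ^ r * M := by
      rw [lintegral_const, mul_left_comm, mul_comm M, mul_comm (ν _ ^ _)]
      congr 1
      nth_rewrite 1 [← ENNReal.rpow_one (ν Set.univ)]
      rw [← ENNReal.rpow_add_of_nonneg _ _ zero_le_one (by linarith), add_sub_cancel]

theorem eLpNorm_lintegral_le_measure_univ_mul [SFinite μ] [SFinite ν] (hp : 1 ≤ p)
    {F : X → Y → ℝ≥0∞} (hF : Measurable (uncurry F)) {M : ℝ≥0∞}
    (hM : ∀ y, eLpNorm (fun x => F x y) p μ ≤ M) :
    eLpNorm (fun x => ∫⁻ y, F x y ∂ν) p μ ≤ ν Set.univ * M := by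
  rcases eq_or_ne p ∞ with rfl | hp_top
  · have hFM : ∀ᵐ x ∂μ, ∀ᵐ y ∂ν, F x y ≤ M := by
      rw [Measure.ae_ae_comm (p := fun x y => F x y ≤ M) (measurableSet_le hF measurable_const)]
      refine .of_forall fun y => ?_
      filter_upwards [enorm_ae_le_eLpNormEssSup (fun x => F x y) μ] with x hx
      exact hx.trans (by simpa using hM y)
    rw [eLpNorm_exponent_top]
    refine essSup_le_of_ae_le _ (hFM.mono fun x hx => ?_)
    calc ∫⁻ y, F x y ∂ν ≤ ∫⁻ _, M ∂ν := lintegral_mono_ae hx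
      _ = ν Set.univ * M := by rw [lintegral_const, mul_comm]
  · have hp₀ : p ≠ 0 := (zero_lt_one.trans_le hp).ne'
    have hr : 1 ≤ p.toReal := by simpa using ENNReal.toReal_mono hp_top hp
    have hr₀ : 0 < p.toReal := by linarith
    simp only [eLpNorm_eq_lintegral_rpow_enorm_toReal hp₀ hp_top, enorm_eq_self, one_div] at hM ⊢
    rw [ENNReal.rpow_inv_le_iff hr₀, ENNReal.mul_rpow_of_nonneg _ _ hr₀.le]
    exact lintegral_rpow_lintegral_le_measure_univ_rpow_mul hr hF fun y =>
      (ENNReal.rpow_inv_le_iff hr₀).1 (hM y)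

open scoped Convolution in
theorem eLpNorm_convolution_le {𝕜 G E E' H : Type*} [NontriviallyNormedField 𝕜]
    [NormedAddCommGroup E] [NormedSpace 𝕜 E] [NormedAddCommGroup E'] [NormedSpace 𝕜 E']
    [NormedAddCommGroup H] [NormedSpace 𝕜 H] [NormedSpace ℝ H] [AddCommGroup G] [MeasurableSpace G]
    [MeasurableAdd₂ G] [MeasurableNeg G] {μ : Measure G} [SFinite μ] [μ.IsAddRightInvariant]
    (hp : 1 ≤ p) (L : E →L[𝕜] E' →L[𝕜] H) {k : G → E} {g : G → E'}
    (hk : AEStronglyMeasurable k μ) (hg : StronglyMeasurable g) :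
    eLpNorm (k ⋆[L, μ] g) p μ ≤ ‖L‖ₑ * eLpNorm k 1 μ * eLpNorm g p μ := by
  set ν := μ.withDensity fun t => ‖k t‖ₑ
  have pointwise (x : G) : ‖(k ⋆[L, μ] g) x‖ₑ ≤ ‖∫⁻ t, ‖L‖ₑ * ‖g (x - t)‖ₑ ∂ν‖ₑ := by
    rw [enorm_eq_self, lintegral_withDensity_eq_lintegral_mul_non_measurable₀ _ hk.enorm (by simp)]
    refine (enorm_integral_le_lintegral_enorm _).trans (lintegral_mono fun t => ?_)
    calc ‖L (k t) (g (x - t))‖ₑ ≤ ‖L (k t)‖ₑ * ‖g (x - t)‖ₑ := (L (k t)).le_opENorm _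
      _ ≤ ‖L‖ₑ * ‖k t‖ₑ * ‖g (x - t)‖ₑ := by gcongr; exact L.le_opENorm _
      _ = ‖k t‖ₑ * (‖L‖ₑ * ‖g (x - t)‖ₑ) := by ring
  have translate (t : G) :
      eLpNorm (fun x => ‖L‖ₑ * ‖g (x - t)‖ₑ) p μ ≤ ‖L‖ₑ * eLpNorm g p μ := by
    have hgt := eLpNorm_comp_measurePreserving (p := p) hg.aestronglyMeasurable
      (measurePreserving_sub_right μ t)
    rw [← hgt]
    refine eLpNorm_le_mul_eLpNorm_of_ae_le_mul'' p (hg.comp_measurable ?_).aestronglyMeasurable ?_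
    · fun_prop
    · simp
  have hν : ν Set.univ = eLpNorm k 1 μ := by
    rw [withDensity_apply _ .univ, Measure.restrict_univ, eLpNorm_one_eq_lintegral_enorm]
  have hF : Measurable (uncurry fun x t => ‖L‖ₑ * ‖g (x - t)‖ₑ) :=
    (hg.enorm.comp measurable_sub).const_mul _
  calc eLpNorm (k ⋆[L, μ] g) p μ
      ≤ eLpNorm (fun x => ∫⁻ t, ‖L‖ₑ * ‖g (x - t)‖ₑ ∂ν) p μ := eLpNorm_mono_enorm pointwise
    _ ≤ ν Set.univ * (‖L‖ₑ * eLpNorm g p μ) := eLpNorm_lintegral_le_measure_univ_mul hp hF translate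
    _ = ‖L‖ₑ * eLpNorm k 1 μ * eLpNorm g p μ := by rw [hν]; ring

theorem eLpNorm_tsum_mul_translate_le {G ι : Type*} [AddGroup G] [MeasurableSpace G] [Countable G]
    [MeasurableSingletonClass G] [Countable ι] (hp : 1 ≤ p) (c : ι → ℝ≥0∞) (σ : ι → G)
    (b : G → ℝ≥0∞) :
    eLpNorm (fun k => ∑' i, c i * b (k + σ i)) p .count ≤ (∑' i, c i) * eLpNorm b p .count := by
  let _ : MeasurableSpace ι := ⊤
  set ν := (Measure.count : Measure ι).withDensity c
  have hsum (k : G) : ∑' i, c i * b (k + σ i) = ∫⁻ i, b (k + σ i) ∂ν := by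
    rw [lintegral_withDensity_eq_lintegral_mul _ (by fun_prop) (by fun_prop), lintegral_count]
    rfl
  have hν : ν Set.univ = ∑' i, c i := by
    rw [withDensity_apply _ .univ, Measure.restrict_univ, lintegral_count]
  simp only [hsum, ← hν]
  refine eLpNorm_lintegral_le_measure_univ_mul hp (by fun_prop) fun i => le_of_eq ?_
  exact eLpNorm_comp_measurePreserving (g := b) (by fun_prop)
    (measurePreserving_add_right .count (σ i))

theorem eLpNorm_ennreal_mul_le {f g : X → ℝ≥0∞} (hf : AEMeasurable f μ) (hg : AEMeasurable g μ)
    (p q : ℝ≥0∞) {r : ℝ≥0∞} [ENNReal.HolderTriple p q r] :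
    eLpNorm (fun x => f x * g x) r μ ≤ eLpNorm f p μ * eLpNorm g q μ := by
  rcases ENNReal.trichotomy p with rfl | rfl | hp
  · simp [ENNReal.HolderTriple.unique 0 q r 0]
  · rw [ENNReal.HolderTriple.unique ∞ q r q]
    refine eLpNorm_le_mul_eLpNorm_of_ae_le_mul'' q hg.aestronglyMeasurable ?_
    filter_upwards [enorm_ae_le_eLpNormEssSup f μ] with x hx
    simpa using mul_le_mul_left hx (g x)
  rcases ENNReal.trichotomy q with rfl | rfl | hq
  · simp [ENNReal.HolderTriple.unique p 0 r 0]
  · rw [ENNReal.HolderTriple.unique p ∞ r p, mul_comm]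
    refine eLpNorm_le_mul_eLpNorm_of_ae_le_mul'' p hf.aestronglyMeasurable ?_
    filter_upwards [enorm_ae_le_eLpNormEssSup g μ] with x hx
    simpa [mul_comm (f x)] using mul_le_mul_left hx (f x)
  have hpqr' := ENNReal.HolderTriple.toReal r hp hq
  simp only [eLpNorm_eq_lintegral_rpow_enorm_toReal, enorm_eq_self, (ENNReal.toReal_pos_iff.1 hp),
    (ENNReal.toReal_pos_iff.1 hq), (ENNReal.toReal_pos_iff.1 hpqr'.pos'), ne_of_gt, ne_of_lt,
    ne_eq, not_false_eq_true]
  exact ENNReal.lintegral_Lp_mul_le_Lq_mul_Lr hpqr'.pos' hpqr'.lt hpqr'.one_div_eq μ hf hg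

theorem eLpNorm_le_tsum_of_tendsto_sum {E : Type*} [NormedAddCommGroup E] (hp : 1 ≤ p)
    {u : ℕ → X → E} (hu : ∀ i, AEStronglyMeasurable (u i) μ) {f : X → E}
    (hf : ∀ᵐ x ∂μ, Tendsto (fun N => ∑ i ∈ Finset.range N, u i x) atTop (nhds (f x))) :
    eLpNorm f p μ ≤ ∑' i, eLpNorm (u i) p μ := by
  have hlim := Lp.eLpNorm_lim_le_liminf_eLpNorm (p := p)
    (fun N => Finset.aestronglyMeasurable_sum (Finset.range N) fun i _ => hu i) f
    (by simpa only [Finset.sum_apply] using hf)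
  refine hlim.trans (liminf_le_of_le (by isBoundedDefault) fun b hb => ?_)
  obtain ⟨N, hN⟩ := hb.exists
  exact hN.trans ((eLpNorm_sum_le (fun i _ => hu i) hp).trans (ENNReal.sum_le_tsum _))

end MinkowskiYoungHolder

theorem tsum_two_rpow_sub_natCast_mul_lt_top (c : ℝ) {s : ℝ} (hs : 0 < s) :
    ∑' i : ℕ, (2 : ℝ≥0∞) ^ ((c - i) * s) < ∞ := by
  have geometric (i : ℕ) :
      (2 : ℝ≥0∞) ^ ((c - i) * s) = 2 ^ (c * s) * ((2 : ℝ≥0∞) ^ (-s)) ^ i := by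
    rw [← ENNReal.rpow_natCast, ← ENNReal.rpow_mul,
      ← ENNReal.rpow_add _ _ two_ne_zero ENNReal.ofNat_ne_top]
    ring_nf
  simp_rw [geometric]
  rw [ENNReal.tsum_mul_left, ENNReal.tsum_geometric]
  refine ENNReal.mul_lt_top (by finiteness) (ENNReal.inv_lt_top.2 (tsub_pos_of_lt ?_))
  exact ENNReal.rpow_lt_one_of_one_lt_of_neg (by norm_num) (by linarith)

section FourierMultiplier

variable {V : Type*} [NormedAddCommGroup V] [InnerProductSpace ℝ V] [FiniteDimensional ℝ V]
  [MeasurableSpace V] [BorelSpace V]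

theorem fourier_fourierMultiplierCLM_apply (m f : 𝓢(V, ℂ)) (ξ : V) :
    𝓕 (SchwartzMap.fourierMultiplierCLM ℂ m f) ξ = m ξ * 𝓕 f ξ := by
  rw [SchwartzMap.fourierMultiplierCLM_apply, FourierTransform.fourier_fourierInv_eq,
    SchwartzMap.smulLeftCLM_apply_apply m.hasTemperateGrowth, smul_eq_mul]

theorem fourierMultiplierCLM_eq_convolution (m f : 𝓢(V, ℂ)) :
    SchwartzMap.fourierMultiplierCLM ℂ m f =
      SchwartzMap.convolution (ContinuousLinearMap.mul ℂ ℂ) (𝓕⁻ m) f := by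
  refine (FourierTransform.fourierCLE ℂ 𝓢(V, ℂ)).injective (SchwartzMap.ext fun ξ => ?_)
  simp only [FourierTransform.fourierCLE_apply]
  rw [fourier_fourierMultiplierCLM_apply, SchwartzMap.fourier_convolution,
    FourierTransform.fourier_fourierInv_eq]
  rfl

theorem eLpNorm_fourierMultiplierCLM_le {p : ℝ≥0∞} (hp : 1 ≤ p) (m f : 𝓢(V, ℂ)) :
    eLpNorm (SchwartzMap.fourierMultiplierCLM ℂ m f) p volume ≤
      eLpNorm (𝓕⁻ m : 𝓢(V, ℂ)) 1 volume * eLpNorm f p volume := by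
  have h_conv : ⇑(SchwartzMap.fourierMultiplierCLM ℂ m f) =
      convolution (𝓕⁻ m : 𝓢(V, ℂ)) f (ContinuousLinearMap.mul ℂ ℂ) volume := by
    rw [fourierMultiplierCLM_eq_convolution]
    exact funext (SchwartzMap.convolution_apply _ _ _)
  have h_mul : ‖ContinuousLinearMap.mul ℂ ℂ‖ₑ = 1 := by
    rw [← ofReal_norm, ContinuousLinearMap.opNorm_mul, ENNReal.ofReal_one]
  rw [h_conv]
  simpa only [h_mul, one_mul] using
    eLpNorm_convolution_le hp (ContinuousLinearMap.mul ℂ ℂ)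
      (𝓕⁻ m : 𝓢(V, ℂ)).continuous.aestronglyMeasurable f.continuous.stronglyMeasurable

theorem fourierMultiplierCLM_apply_eq_integral (m f : 𝓢(V, ℂ)) (x : V) :
    SchwartzMap.fourierMultiplierCLM ℂ m f x = ∫ ξ, 𝐞 (inner ℝ ξ x) • (m ξ * 𝓕 f ξ) := by
  rw [← FourierTransform.fourierInv_fourier_eq (F := 𝓢(V, ℂ))
      (SchwartzMap.fourierMultiplierCLM ℂ m f),
    SchwartzMap.fourierInv_coe, Real.fourierInv_eq]
  simp only [fourier_fourierMultiplierCLM_apply]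

theorem fourierInv_comp_smul (g : V → ℂ) {c : ℝ} (hc : c ≠ 0) (x : V) :
    𝓕⁻ (fun ξ => g (c • ξ)) x = |(c ^ Module.finrank ℝ V)⁻¹| • 𝓕⁻ g (c⁻¹ • x) := by
  simp only [Real.fourierInv_eq]
  rw [← Measure.integral_comp_smul]
  simp [real_inner_smul_left, real_inner_smul_right, hc]

theorem eLpNorm_fourierInv_comp_smul (g : V → ℂ) {c : ℝ} (hc : c ≠ 0) :
    eLpNorm (𝓕⁻ fun ξ => g (c • ξ)) 1 volume = eLpNorm (𝓕⁻ g) 1 volume := by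
  have hc' : c⁻¹ ≠ 0 := inv_ne_zero hc
  have h : 𝓕⁻ (fun ξ => g (c • ξ)) = |(c ^ Module.finrank ℝ V)⁻¹| • fun x => 𝓕⁻ g (c⁻¹ • x) :=
    funext fun x => fourierInv_comp_smul g hc x
  have h_map : eLpNorm (fun x => 𝓕⁻ g (c⁻¹ • x)) 1 volume =
      eLpNorm (𝓕⁻ g) 1 (volume.map (c⁻¹ • · : V → V)) :=
    ((Homeomorph.smulOfNeZero c⁻¹ hc').measurableEmbedding.eLpNorm_map_measure).symm
  rw [h, eLpNorm_const_smul, h_map, Measure.map_addHaar_smul _ hc',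
    eLpNorm_one_smul_measure, ← mul_assoc, Real.enorm_of_nonneg (abs_nonneg _),
    ← ENNReal.ofReal_mul (abs_nonneg _), ← abs_mul, inv_pow,
    mul_inv_cancel₀ (inv_ne_zero (pow_ne_zero _ hc)), abs_one, ENNReal.ofReal_one, one_mul]

end FourierMultiplier

section DyadicSymbols

variable {V : Type*} [NormedAddCommGroup V] [InnerProductSpace ℝ V]

/-- The pointwise product of two Schwartz functions, as a Schwartz function. -/
def schwartzMul (f g : 𝓢(V, ℂ)) : 𝓢(V, ℂ) :=
  SchwartzMap.pairing (ContinuousLinearMap.mul ℂ ℂ) f g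

theorem schwartzMul_apply (f g : 𝓢(V, ℂ)) (x : V) : schwartzMul f g x = f x * g x := rfl

/-- The dilated symbol `m(2^{-j} ·)`. -/
def dyadicDilate (m : 𝓢(V, ℂ)) (j : ℤ) : 𝓢(V, ℂ) :=
  SchwartzMap.compCLMOfContinuousLinearEquiv ℂ
    (ContinuousLinearEquiv.smulLeft (Units.mk0 ((2 : ℝ) ^ (-j)) (by positivity))) m

theorem dyadicDilate_apply (m : 𝓢(V, ℂ)) (j : ℤ) (ξ : V) :
    dyadicDilate m j ξ = m ((2 : ℝ) ^ (-j) • ξ) := rfl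

/-- A symbol equal to `1` on the closed ball of radius `r` and to `0` outside the closed ball of
radius `2 * r`, the situation in which `S_j` is a projection onto frequencies of size `≲ 2^j`. -/
structure IsDyadicCutoff (m : V → ℂ) (r : ℝ) : Prop where
  pos : 0 < r
  eq_one : ∀ ξ, ‖ξ‖ ≤ r → m ξ = 1
  eq_zero : ∀ ξ, 2 * r < ‖ξ‖ → m ξ = 0

namespace IsDyadicCutoff

variable {m : 𝓢(V, ℂ)} {r : ℝ}

theorem dyadicDilate_eq_one (hm : IsDyadicCutoff m r) {j : ℤ} {ξ : V} (h : ‖ξ‖ ≤ 2 ^ j * r) :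
    dyadicDilate m j ξ = 1 := by
  rw [dyadicDilate_apply]
  refine hm.eq_one _ ?_
  rwa [norm_smul, norm_zpow, Real.norm_ofNat, zpow_neg, inv_mul_le_iff₀ (by positivity)]

theorem dyadicDilate_eq_zero (hm : IsDyadicCutoff m r) {j : ℤ} {ξ : V}
    (h : 2 ^ (j + 1) * r < ‖ξ‖) : dyadicDilate m j ξ = 0 := by
  rw [dyadicDilate_apply]
  refine hm.eq_zero _ ?_
  rwa [norm_smul, norm_zpow, Real.norm_ofNat, zpow_neg, lt_inv_mul_iff₀ (by positivity),
    ← mul_assoc, ← zpow_add_one₀ two_ne_zero]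

end IsDyadicCutoff

end DyadicSymbols

section DyadicDecomposition

variable {V : Type*} [NormedAddCommGroup V] [InnerProductSpace ℝ V] [FiniteDimensional ℝ V]
  [MeasurableSpace V] [BorelSpace V]

theorem fourierInv_fourier_apply_eq_integral (f : 𝓢(V, ℂ)) (x : V) :
    f x = ∫ ξ, 𝐞 (inner ℝ ξ x) • 𝓕 f ξ := by
  conv_lhs => rw [← FourierTransform.fourierInv_fourier_eq (F := 𝓢(V, ℂ)) f]
  rw [SchwartzMap.fourierInv_coe, Real.fourierInv_eq]

theorem tendsto_fourierMultiplierCLM_apply {ι : Type*} {l : Filter ι} [l.IsCountablyGenerated]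
    {m : ι → 𝓢(V, ℂ)} {B : ℝ} (hB : ∀ i ξ, ‖m i ξ‖ ≤ B) {c : ℂ}
    (hm : ∀ᵐ ξ, Tendsto (fun i => m i ξ) l (nhds c)) (f : 𝓢(V, ℂ)) (x : V) :
    Tendsto (fun i => SchwartzMap.fourierMultiplierCLM ℂ (m i) f x) l (nhds (c * f x)) := by
  simp only [fourierMultiplierCLM_apply_eq_integral]
  rw [fourierInv_fourier_apply_eq_integral f, ← integral_const_mul]
  refine tendsto_integral_filter_of_dominated_convergence (fun ξ => B * ‖𝓕 f ξ‖)
    (.of_forall fun i => ?_) (.of_forall fun i => .of_forall fun ξ => ?_)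
    ((SchwartzMap.integrable (𝓕 f)).norm.const_mul B) ?_
  · refine Continuous.aestronglyMeasurable ?_
    simp only [Circle.smul_def]
    fun_prop
  · rw [Circle.norm_smul, norm_mul]
    gcongr
    exact hB i ξ
  · filter_upwards [hm] with ξ hξ
    rw [mul_smul_comm]
    exact (hξ.mul_const _).const_smul _

theorem eLpNorm_fourierInv_dyadicDilate (m : 𝓢(V, ℂ)) (j : ℤ) :
    eLpNorm (𝓕⁻ (dyadicDilate m j) : 𝓢(V, ℂ)) 1 volume =
      eLpNorm (𝓕⁻ m : 𝓢(V, ℂ)) 1 volume := by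
  rw [SchwartzMap.fourierInv_coe, SchwartzMap.fourierInv_coe]
  exact eLpNorm_fourierInv_comp_smul m (zpow_ne_zero _ two_ne_zero)

/-- The low-frequency projection `S_j` with symbol `m(2^{-j} ·)`. -/
def lowPass (m : 𝓢(V, ℂ)) (j : ℤ) : 𝓢(V, ℂ) →L[ℂ] 𝓢(V, ℂ) :=
  SchwartzMap.fourierMultiplierCLM ℂ (dyadicDilate m j)

/-- The frequency block `Δ_j = S_{j+1} - S_j`. -/
def dyadicBlock (m : 𝓢(V, ℂ)) (j : ℤ) : 𝓢(V, ℂ) →L[ℂ] 𝓢(V, ℂ) :=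
  lowPass m (j + 1) - lowPass m j

theorem dyadicBlock_apply (m : 𝓢(V, ℂ)) (j : ℤ) (f : 𝓢(V, ℂ)) (x : V) :
    dyadicBlock m j f x = lowPass m (j + 1) f x - lowPass m j f x := rfl

theorem fourier_dyadicBlock_apply (m : 𝓢(V, ℂ)) (j : ℤ) (f : 𝓢(V, ℂ)) (ξ : V) :
    𝓕 (dyadicBlock m j f) ξ =
      (dyadicDilate m (j + 1) ξ - dyadicDilate m j ξ) * 𝓕 f ξ := by
  have h_sub : 𝓕 (dyadicBlock m j f) = 𝓕 (lowPass m (j + 1) f) - 𝓕 (lowPass m j f) :=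
    map_sub (FourierTransform.fourierCLM ℂ 𝓢(V, ℂ)) _ _
  rw [h_sub, sub_apply, lowPass, lowPass, fourier_fourierMultiplierCLM_apply,
    fourier_fourierMultiplierCLM_apply, sub_mul]

theorem eLpNorm_lowPass_le {p : ℝ≥0∞} (hp : 1 ≤ p) (m : 𝓢(V, ℂ)) (j : ℤ) (f : 𝓢(V, ℂ)) :
    eLpNorm (lowPass m j f) p volume ≤
      eLpNorm (𝓕⁻ m : 𝓢(V, ℂ)) 1 volume * eLpNorm f p volume := by
  rw [← eLpNorm_fourierInv_dyadicDilate m j]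
  exact eLpNorm_fourierMultiplierCLM_le hp _ f

theorem eLpNorm_dyadicBlock_le {p : ℝ≥0∞} (hp : 1 ≤ p) (m : 𝓢(V, ℂ)) (j : ℤ) (f : 𝓢(V, ℂ)) :
    eLpNorm (dyadicBlock m j f) p volume ≤
      2 * eLpNorm (𝓕⁻ m : 𝓢(V, ℂ)) 1 volume * eLpNorm f p volume := by
  rw [mul_assoc, two_mul]
  exact (eLpNorm_sub_le (SchwartzMap.continuous _).aestronglyMeasurable
    (SchwartzMap.continuous _).aestronglyMeasurable hp).trans
    (add_le_add (eLpNorm_lowPass_le hp m _ f) (eLpNorm_lowPass_le hp m _ f))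

theorem tendsto_two_zpow_atTop : Tendsto (fun j : ℤ => (2 : ℝ) ^ j) atTop atTop := by
  have h := (tendsto_rpow_atTop_of_base_gt_one 2 one_lt_two).comp
    (tendsto_intCast_atTop_atTop (R := ℝ))
  simpa only [Function.comp_def, Real.rpow_intCast] using h

theorem tendsto_lowPass_atTop (m f : 𝓢(V, ℂ)) (x : V) :
    Tendsto (fun j => lowPass m j f x) atTop (nhds (m 0 * f x)) := by
  refine tendsto_fourierMultiplierCLM_apply (m := dyadicDilate m)
    (fun _ _ => SchwartzMap.norm_le_seminorm ℂ m _) (.of_forall fun ξ => ?_) f x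
  simp only [dyadicDilate_apply]
  have h_scale : Tendsto (fun j : ℤ => (2 : ℝ) ^ (-j)) atTop (nhds 0) := by
    simp only [zpow_neg]
    exact tendsto_two_zpow_atTop.inv_tendsto_atTop
  have h := h_scale.smul_const ξ
  rw [zero_smul] at h
  exact (m.continuous.tendsto 0).comp h

theorem tendsto_lowPass_atBot [Nontrivial V] (m f : 𝓢(V, ℂ)) (x : V) :
    Tendsto (fun j => lowPass m j f x) atBot (nhds 0) := by
  rw [← zero_mul (f x)]
  refine tendsto_fourierMultiplierCLM_apply (m := dyadicDilate m)
    (fun _ _ => SchwartzMap.norm_le_seminorm ℂ m _) ?_ f x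
  filter_upwards [compl_mem_ae_iff.2 (measure_singleton (0 : V))] with ξ hξ
  simp only [dyadicDilate_apply]
  have h_scale : Tendsto (fun j : ℤ => (2 : ℝ) ^ (-j)) atBot atTop :=
    tendsto_two_zpow_atTop.comp tendsto_neg_atBot_atTop
  refine m.toZeroAtInfty.zero_at_infty'.comp ?_
  rw [← Metric.cobounded_eq_cocompact, ← comap_norm_atTop, tendsto_comap_iff, comp_def]
  simp only [norm_smul, norm_zpow, Real.norm_ofNat]
  exact h_scale.atTop_mul_const (norm_pos_iff.2 hξ)

end DyadicDecomposition

section Paraproduct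

variable {V : Type*} [NormedAddCommGroup V] [InnerProductSpace ℝ V] [FiniteDimensional ℝ V]
  [MeasurableSpace V] [BorelSpace V]

theorem fourierInv_schwartzMul_eq_convolution (f g : 𝓢(V, ℂ)) :
    𝓕⁻ (schwartzMul f g) =
      SchwartzMap.convolution (ContinuousLinearMap.mul ℂ ℂ) (𝓕⁻ f) (𝓕⁻ g) := by
  refine (FourierTransform.fourierCLE ℂ 𝓢(V, ℂ)).injective ?_
  simp only [FourierTransform.fourierCLE_apply, SchwartzMap.fourier_convolution,
    FourierTransform.fourier_fourierInv_eq]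
  rfl

theorem fourierInv_apply_eq_fourier_neg (f : 𝓢(V, ℂ)) (ξ : V) :
    (𝓕⁻ f : 𝓢(V, ℂ)) ξ = (𝓕 f : 𝓢(V, ℂ)) (-ξ) := by
  rw [SchwartzMap.fourierInv_coe, SchwartzMap.fourier_coe, Real.fourierInv_eq_fourier_neg]

theorem fourier_schwartzMul_eq_zero {f g : 𝓢(V, ℂ)} {R₁ R₂ : ℝ}
    (hf : ∀ η : V, R₁ < ‖η‖ → 𝓕 f η = 0) (hg : ∀ η : V, R₂ < ‖η‖ → 𝓕 g η = 0)
    {ξ : V} (hξ : R₁ + R₂ < ‖ξ‖) : 𝓕 (schwartzMul f g) ξ = 0 := by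
  rw [← neg_neg ξ, ← fourierInv_apply_eq_fourier_neg, fourierInv_schwartzMul_eq_convolution,
    SchwartzMap.convolution_apply]
  refine integral_eq_zero_of_ae (.of_forall fun η => ?_)
  simp only [fourierInv_apply_eq_fourier_neg, ContinuousLinearMap.mul_apply', Pi.zero_apply]
  rcases lt_or_ge R₁ ‖η‖ with hη | hη
  · rw [hf (-η) (by rwa [norm_neg]), zero_mul]
  · have h_neg : -(-ξ - η) = ξ - -η := by abel
    have h_tri := norm_sub_norm_le ξ (-η)
    rw [norm_neg] at h_tri
    rw [h_neg, hg (ξ - -η) (by linarith), mul_zero]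

namespace IsDyadicCutoff

variable {m : 𝓢(V, ℂ)} {r : ℝ}

theorem fourier_lowPass_eq_zero (hm : IsDyadicCutoff m r) {j : ℤ} (f : 𝓢(V, ℂ)) (ξ : V)
    (h : 2 ^ (j + 1) * r < ‖ξ‖) : 𝓕 (lowPass m j f) ξ = 0 := by
  rw [lowPass, fourier_fourierMultiplierCLM_apply, hm.dyadicDilate_eq_zero h, zero_mul]

theorem fourier_dyadicBlock_eq_zero (hm : IsDyadicCutoff m r) {j : ℤ} (f : 𝓢(V, ℂ)) (ξ : V)
    (h : ‖ξ‖ ≤ 2 ^ j * r) : 𝓕 (dyadicBlock m j f) ξ = 0 := by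
  have hr := hm.pos
  have h' : ‖ξ‖ ≤ 2 ^ (j + 1) * r := h.trans (by gcongr <;> simp)
  rw [fourier_dyadicBlock_apply, hm.dyadicDilate_eq_one h', hm.dyadicDilate_eq_one h,
    sub_self, zero_mul]

theorem dyadicBlock_schwartzMul_lowPass_eq_zero (hm : IsDyadicCutoff m r) (j : ℤ)
    (f g : 𝓢(V, ℂ)) :
    dyadicBlock m j (schwartzMul (lowPass m (j - 2) f) (lowPass m (j - 2) g)) = 0 := by
  refine (FourierTransform.fourierCLE ℂ 𝓢(V, ℂ)).injective (SchwartzMap.ext fun ξ => ?_)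
  rw [map_zero, FourierTransform.fourierCLE_apply, zero_apply]
  rcases le_or_gt ‖ξ‖ (2 ^ j * r) with h | h
  · exact hm.fourier_dyadicBlock_eq_zero _ ξ h
  · rw [fourier_dyadicBlock_apply, fourier_schwartzMul_eq_zero (hm.fourier_lowPass_eq_zero f)
      (hm.fourier_lowPass_eq_zero g), mul_zero]
    refine lt_of_eq_of_lt ?_ h
    rw [← two_mul, ← mul_assoc, ← zpow_one_add₀ two_ne_zero]
    congr 2
    ring

theorem tendsto_lowPass_atTop (hm : IsDyadicCutoff m r) (f : 𝓢(V, ℂ)) (x : V) :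
    Tendsto (fun j => lowPass m j f x) atTop (nhds (f x)) := by
  simpa only [hm.eq_one 0 (by simpa using hm.pos.le), one_mul] using
    _root_.tendsto_lowPass_atTop m f x

end IsDyadicCutoff

theorem eLpNorm_lowPass_le_tsum_dyadicBlock [Nontrivial V] {p : ℝ≥0∞} (hp : 1 ≤ p)
    (m f : 𝓢(V, ℂ)) (k : ℤ) :
    eLpNorm (lowPass m k f) p volume ≤
      ∑' i : ℕ, eLpNorm (dyadicBlock m (k - 1 - i) f) p volume := by
  refine eLpNorm_le_tsum_of_tendsto_sum hp
    (fun _ => (SchwartzMap.continuous _).aestronglyMeasurable) (.of_forall fun x => ?_)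
  have h_sum (N : ℕ) : ∑ i ∈ Finset.range N, dyadicBlock m (k - 1 - i) f x =
      lowPass m k f x - lowPass m (k - N) f x := by
    have h := Finset.sum_range_sub' (fun i : ℕ => lowPass m (k - i) f x) N
    rw [Nat.cast_zero, sub_zero] at h
    rw [← h]
    refine Finset.sum_congr rfl fun i _ => ?_
    rw [dyadicBlock_apply, sub_right_comm, sub_add_cancel, Nat.cast_succ, sub_sub]
  have h_shift : Tendsto (fun N : ℕ => k - (N : ℤ)) atTop atBot := by
    simp only [sub_eq_add_neg]
    exact tendsto_atBot_add_const_left atTop k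
      (tendsto_neg_atTop_atBot.comp tendsto_natCast_atTop_atTop)
  simpa only [h_sum, sub_zero, comp_def] using
    tendsto_const_nhds.sub ((tendsto_lowPass_atBot m f x).comp h_shift)

/-- The increment `S_{k+1}f · S_{k+1}g - S_k f · S_k g` of the product of low-frequency parts,
expanded by the Leibniz rule into its two paraproduct terms. -/
def paraproductIncrement (m : 𝓢(V, ℂ)) (k : ℤ) (f g : 𝓢(V, ℂ)) : 𝓢(V, ℂ) :=
  schwartzMul (dyadicBlock m k f) (lowPass m (k + 1) g) +
    schwartzMul (lowPass m k f) (dyadicBlock m k g)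

theorem paraproductIncrement_apply (m : 𝓢(V, ℂ)) (k : ℤ) (f g : 𝓢(V, ℂ)) (x : V) :
    paraproductIncrement m k f g x =
      lowPass m (k + 1) f x * lowPass m (k + 1) g x - lowPass m k f x * lowPass m k g x := by
  rw [paraproductIncrement, add_apply, schwartzMul_apply, schwartzMul_apply, dyadicBlock_apply,
    dyadicBlock_apply]
  ring

theorem eLpNorm_schwartzMul_le {p₁ p₂ p : ℝ≥0∞} [ENNReal.HolderTriple p₁ p₂ p]
    (f g : 𝓢(V, ℂ)) :
    eLpNorm (schwartzMul f g) p volume ≤ eLpNorm f p₁ volume * eLpNorm g p₂ volume := by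
  have h_smul : ⇑(schwartzMul f g) = ⇑f • ⇑g := rfl
  rw [h_smul]
  exact eLpNorm_smul_le_mul_eLpNorm g.continuous.aestronglyMeasurable
    f.continuous.aestronglyMeasurable

theorem eLpNorm_paraproductIncrement_le {p p₁ p₂ p₃ p₄ : ℝ≥0∞} (hp : 1 ≤ p)
    [ENNReal.HolderTriple p₁ p₂ p] [ENNReal.HolderTriple p₃ p₄ p] (m : 𝓢(V, ℂ)) (k : ℤ)
    (f g : 𝓢(V, ℂ)) :
    eLpNorm (paraproductIncrement m k f g) p volume ≤
      eLpNorm (dyadicBlock m k f) p₁ volume * eLpNorm (lowPass m (k + 1) g) p₂ volume +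
        eLpNorm (lowPass m k f) p₃ volume * eLpNorm (dyadicBlock m k g) p₄ volume :=
  (eLpNorm_add_le (SchwartzMap.continuous _).aestronglyMeasurable
    (SchwartzMap.continuous _).aestronglyMeasurable hp).trans
    (add_le_add (eLpNorm_schwartzMul_le _ _) (eLpNorm_schwartzMul_le _ _))

namespace IsDyadicCutoff

variable {m : 𝓢(V, ℂ)} {r : ℝ}

theorem eLpNorm_schwartzMul_sub_le (hm : IsDyadicCutoff m r) {p : ℝ≥0∞} (hp : 1 ≤ p) (k : ℤ)
    (f g : 𝓢(V, ℂ)) :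
    eLpNorm (schwartzMul f g - schwartzMul (lowPass m k f) (lowPass m k g) : 𝓢(V, ℂ)) p volume ≤
      ∑' i : ℕ, eLpNorm (paraproductIncrement m (k + i) f g) p volume := by
  refine eLpNorm_le_tsum_of_tendsto_sum hp
    (fun _ => (SchwartzMap.continuous _).aestronglyMeasurable) (.of_forall fun x => ?_)
  have h_sum (N : ℕ) : ∑ i ∈ Finset.range N, paraproductIncrement m (k + i) f g x =
      lowPass m (k + N) f x * lowPass m (k + N) g x - lowPass m k f x * lowPass m k g x := by
    have h := Finset.sum_range_sub
      (fun i : ℕ => lowPass m (k + i) f x * lowPass m (k + i) g x) N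
    rw [Nat.cast_zero, add_zero] at h
    rw [← h]
    refine Finset.sum_congr rfl fun i _ => ?_
    rw [paraproductIncrement_apply, Nat.cast_succ, add_assoc]
  have h_shift : Tendsto (fun N : ℕ => k + (N : ℤ)) atTop atTop :=
    tendsto_atTop_add_const_left atTop k tendsto_natCast_atTop_atTop
  have h_lim (u : 𝓢(V, ℂ)) := (hm.tendsto_lowPass_atTop u x).comp h_shift
  simpa only [h_sum, comp_def, sub_apply, schwartzMul_apply] using
    ((h_lim f).mul (h_lim g)).sub_const _

theorem eLpNorm_dyadicBlock_schwartzMul_le (hm : IsDyadicCutoff m r) {p : ℝ≥0∞} (hp : 1 ≤ p)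
    (j : ℤ) (f g : 𝓢(V, ℂ)) :
    eLpNorm (dyadicBlock m j (schwartzMul f g)) p volume ≤
      2 * eLpNorm (𝓕⁻ m : 𝓢(V, ℂ)) 1 volume *
        ∑' i : ℕ, eLpNorm (paraproductIncrement m (j - 2 + i) f g) p volume := by
  have h_low := hm.dyadicBlock_schwartzMul_lowPass_eq_zero j f g
  rw [← sub_zero (dyadicBlock m j (schwartzMul f g)), ← h_low, ← map_sub]
  grw [eLpNorm_dyadicBlock_le hp, hm.eLpNorm_schwartzMul_sub_le hp]

end IsDyadicCutoff

/-- The sequence `2^{js} ‖Δ_j f‖_{L^p}` whose `ℓ^q` norm is the homogeneous Besov norm. -/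
def besovSequence (m : 𝓢(V, ℂ)) (s : ℝ) (p : ℝ≥0∞) (f : 𝓢(V, ℂ)) (j : ℤ) : ℝ≥0∞ :=
  (2 : ℝ≥0∞) ^ ((j : ℝ) * s) * eLpNorm (dyadicBlock m j f) p volume

/-- The sequence `2^{ks} ‖S_{k+e} f‖_{L^p}`. The weight ignores the shift `e`, which is `0` or `1`
in the two paraproduct terms. -/
def lowPassSequence (m : 𝓢(V, ℂ)) (s : ℝ) (p : ℝ≥0∞) (e : ℤ) (f : 𝓢(V, ℂ)) (k : ℤ) : ℝ≥0∞ :=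
  (2 : ℝ≥0∞) ^ ((k : ℝ) * s) * eLpNorm (lowPass m (k + e) f) p volume

theorem two_rpow_mul_two_rpow (a b : ℝ) : (2 : ℝ≥0∞) ^ a * 2 ^ b = 2 ^ (a + b) :=
  (ENNReal.rpow_add a b two_ne_zero ENNReal.ofNat_ne_top).symm

theorem eLpNorm_lowPassSequence_le [Nontrivial V] {p q : ℝ≥0∞} (hp : 1 ≤ p) (hq : 1 ≤ q)
    (m f : 𝓢(V, ℂ)) (α : ℝ) (e : ℤ) :
    eLpNorm (lowPassSequence m (-α) p e f) q .count ≤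
      (∑' i : ℕ, (2 : ℝ≥0∞) ^ (((e : ℝ) - 1 - i) * α)) *
        eLpNorm (besovSequence m (-α) p f) q .count := by
  refine (eLpNorm_mono_enorm fun k => ?_).trans
    (eLpNorm_tsum_mul_translate_le hq _ (fun i : ℕ => e - 1 - i) _)
  simp only [enorm_eq_self, lowPassSequence]
  grw [eLpNorm_lowPass_le_tsum_dyadicBlock hp]
  rw [← ENNReal.tsum_mul_left]
  refine ENNReal.tsum_le_tsum fun i => Eq.le ?_
  rw [besovSequence, ← mul_assoc, two_rpow_mul_two_rpow]
  congr 2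
  · push_cast
    ring
  · rw [add_sub_assoc, add_sub_assoc]

theorem eLpNorm_paraproductIncrement_sequence_le {p p₁ p₂ p₃ p₄ q q₁ q₂ q₃ q₄ : ℝ≥0∞} (hp : 1 ≤ p)
    (hq : 1 ≤ q) [ENNReal.HolderTriple p₁ p₂ p] [ENNReal.HolderTriple p₃ p₄ p]
    [ENNReal.HolderTriple q₁ q₂ q] [ENNReal.HolderTriple q₃ q₄ q] (m f g : 𝓢(V, ℂ))
    (s α β : ℝ) :
    eLpNorm (fun k : ℤ => (2 : ℝ≥0∞) ^ ((k : ℝ) * s) *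
        eLpNorm (paraproductIncrement m k f g) p volume) q .count ≤
      eLpNorm (besovSequence m (s + α) p₁ f) q₁ .count *
          eLpNorm (lowPassSequence m (-α) p₂ 1 g) q₂ .count +
        eLpNorm (lowPassSequence m (-β) p₃ 0 f) q₃ .count *
          eLpNorm (besovSequence m (s + β) p₄ g) q₄ .count := by
  have h_pointwise (k : ℤ) : (2 : ℝ≥0∞) ^ ((k : ℝ) * s) *
      eLpNorm (paraproductIncrement m k f g) p volume ≤
        besovSequence m (s + α) p₁ f k * lowPassSequence m (-α) p₂ 1 g k +
          lowPassSequence m (-β) p₃ 0 f k * besovSequence m (s + β) p₄ g k := by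
    have h_split (a b : ℝ) (hab : a + b = s) :
        (2 : ℝ≥0∞) ^ ((k : ℝ) * s) = 2 ^ ((k : ℝ) * a) * 2 ^ ((k : ℝ) * b) := by
      rw [two_rpow_mul_two_rpow, ← mul_add, hab]
    grw [eLpNorm_paraproductIncrement_le hp (p₁ := p₁) (p₂ := p₂) (p₃ := p₃) (p₄ := p₄)]
    rw [mul_add]
    nth_rewrite 1 [h_split (s + α) (-α) (by ring)]
    rw [h_split (-β) (s + β) (by ring), mul_mul_mul_comm, mul_mul_mul_comm _ _ (eLpNorm _ _ _)]
    simp only [besovSequence, lowPassSequence, add_zero, le_refl]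
  refine (eLpNorm_mono_enorm h_pointwise).trans ((eLpNorm_add_le ?_ ?_ hq).trans
    (add_le_add (eLpNorm_ennreal_mul_le ?_ ?_ q₁ q₂) (eLpNorm_ennreal_mul_le ?_ ?_ q₃ q₄)))
  all_goals exact .of_discrete

namespace IsDyadicCutoff

variable {m : 𝓢(V, ℂ)} {r : ℝ}

theorem eLpNorm_besovSequence_schwartzMul_le (hm : IsDyadicCutoff m r) {p q : ℝ≥0∞} (hp : 1 ≤ p)
    (hq : 1 ≤ q) (s : ℝ) (f g : 𝓢(V, ℂ)) :
    eLpNorm (besovSequence m s p (schwartzMul f g)) q .count ≤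
      2 * eLpNorm (𝓕⁻ m : 𝓢(V, ℂ)) 1 volume * (∑' i : ℕ, (2 : ℝ≥0∞) ^ ((2 - (i : ℝ)) * s)) *
        eLpNorm (fun k : ℤ => (2 : ℝ≥0∞) ^ ((k : ℝ) * s) *
          eLpNorm (paraproductIncrement m k f g) p volume) q .count := by
  rw [← ENNReal.tsum_mul_left]
  refine (eLpNorm_mono_enorm fun j => ?_).trans
    (eLpNorm_tsum_mul_translate_le hq _ (fun i : ℕ => (i : ℤ) - 2) _)
  simp only [enorm_eq_self, besovSequence]
  grw [hm.eLpNorm_dyadicBlock_schwartzMul_le hp]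
  rw [mul_left_comm, ← ENNReal.tsum_mul_left, ← ENNReal.tsum_mul_left]
  refine ENNReal.tsum_le_tsum fun i => Eq.le ?_
  rw [mul_assoc (2 * _), ← mul_assoc (2 ^ _), two_rpow_mul_two_rpow]
  congr 3
  · push_cast
    ring
  · congr 2
    ring

theorem eLpNorm_besovSequence_schwartzMul_le_add [Nontrivial V] (hm : IsDyadicCutoff m r)
    {p p₁ p₂ p₃ p₄ q q₁ q₂ q₃ q₄ : ℝ≥0∞} (hp : 1 ≤ p) (hq : 1 ≤ q)
    [ENNReal.HolderTriple p₁ p₂ p] [ENNReal.HolderTriple p₃ p₄ p]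
    [ENNReal.HolderTriple q₁ q₂ q] [ENNReal.HolderTriple q₃ q₄ q] (s α β : ℝ)
    (f g : 𝓢(V, ℂ)) :
    eLpNorm (besovSequence m s p (schwartzMul f g)) q .count ≤
      2 * eLpNorm (𝓕⁻ m : 𝓢(V, ℂ)) 1 volume * (∑' i : ℕ, (2 : ℝ≥0∞) ^ ((2 - (i : ℝ)) * s)) *
        ((∑' i : ℕ, (2 : ℝ≥0∞) ^ ((0 - (i : ℝ)) * α)) +
          ∑' i : ℕ, (2 : ℝ≥0∞) ^ ((-1 - (i : ℝ)) * β)) *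
        (eLpNorm (besovSequence m (s + α) p₁ f) q₁ .count *
            eLpNorm (besovSequence m (-α) p₂ g) q₂ .count +
          eLpNorm (besovSequence m (-β) p₃ f) q₃ .count *
            eLpNorm (besovSequence m (s + β) p₄ g) q₄ .count) := by
  have hp₂ : 1 ≤ p₂ := hp.trans (ENNReal.HolderTriple.le p₂ p₁ p)
  have hq₂ : 1 ≤ q₂ := hq.trans (ENNReal.HolderTriple.le q₂ q₁ q)
  have hp₃ : 1 ≤ p₃ := hp.trans (ENNReal.HolderTriple.le p₃ p₄ p)
  have hq₃ : 1 ≤ q₃ := hq.trans (ENNReal.HolderTriple.le q₃ q₄ q)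
  have hα := eLpNorm_lowPassSequence_le hp₂ hq₂ m g α 1
  have hβ := eLpNorm_lowPassSequence_le hp₃ hq₃ m f β 0
  rw [Int.cast_one, sub_self] at hα
  rw [Int.cast_zero, zero_sub] at hβ
  grw [hm.eLpNorm_besovSequence_schwartzMul_le hp hq, eLpNorm_paraproductIncrement_sequence_le
    (p₁ := p₁) (p₂ := p₂) (p₃ := p₃) (p₄ := p₄) (q₁ := q₁) (q₂ := q₂) (q₃ := q₃) (q₄ := q₄)
    hp hq m f g s α β, hα, hβ]
  rw [mul_assoc _ (_ + _)]
  gcongr _ * ?_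
  rw [mul_left_comm, mul_assoc, add_mul, mul_add, mul_add]
  exact add_le_add le_self_add le_add_self

theorem exists_eLpNorm_besovSequence_schwartzMul_le [Nontrivial V] (hm : IsDyadicCutoff m r)
    {p p₁ p₂ p₃ p₄ q q₁ q₂ q₃ q₄ : ℝ≥0∞} (hp : 1 ≤ p) (hq : 1 ≤ q)
    [ENNReal.HolderTriple p₁ p₂ p] [ENNReal.HolderTriple p₃ p₄ p]
    [ENNReal.HolderTriple q₁ q₂ q] [ENNReal.HolderTriple q₃ q₄ q] {s α β : ℝ} (hs : 0 < s)
    (hα : 0 < α) (hβ : 0 < β) :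
    ∃ C : ℝ≥0∞, 0 < C ∧ C < ∞ ∧ ∀ f g : 𝓢(V, ℂ),
      eLpNorm (besovSequence m s p (schwartzMul f g)) q .count ≤
        C * (eLpNorm (besovSequence m (s + α) p₁ f) q₁ .count *
            eLpNorm (besovSequence m (-α) p₂ g) q₂ .count +
          eLpNorm (besovSequence m (-β) p₃ f) q₃ .count *
            eLpNorm (besovSequence m (s + β) p₄ g) q₄ .count) := by
  have h_kernel := (SchwartzMap.memLp (𝓕⁻ m : 𝓢(V, ℂ)) 1 volume).eLpNorm_lt_top
  have hs_sum := tsum_two_rpow_sub_natCast_mul_lt_top 2 hs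
  have hα_sum := tsum_two_rpow_sub_natCast_mul_lt_top 0 hα
  have hβ_sum := tsum_two_rpow_sub_natCast_mul_lt_top (-1) hβ
  refine ⟨_ + 1, by positivity, ENNReal.add_lt_top.2 ⟨?_, ENNReal.one_lt_top⟩, fun f g =>
    (hm.eLpNorm_besovSequence_schwartzMul_le_add hp hq s α β f g).trans
      (mul_le_mul_left le_self_add _)⟩
  exact ENNReal.mul_lt_top (ENNReal.mul_lt_top (by finiteness) hs_sum)
    (ENNReal.add_lt_top.2 ⟨hα_sum, hβ_sum⟩)

end IsDyadicCutoff

end Paraproduct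

section CutoffFunction

variable {n : ℕ} {χ : EuclideanSpace ℝ (Fin n) → ℝ} {r : ℝ}

theorem lqNorm_eq_eLpNorm_count {q : ℝ≥0∞} (hq : 1 ≤ q) (a : ℤ → ℝ≥0∞) :
    lqNorm q a = eLpNorm a q .count := by
  have hq₀ : q ≠ 0 := (zero_lt_one.trans_le hq).ne'
  rw [lqNorm]
  split_ifs with h
  · rw [h, eLpNorm_exponent_top, eLpNormEssSup_count]
    rfl
  · simp only [eLpNorm_eq_lintegral_rpow_enorm_toReal hq₀ h, enorm_eq_self, lintegral_count]

/-- A smooth real symbol vanishing for large frequencies, as a complex Schwartz function. -/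
def cutoffSymbol (h_smooth : ContDiff ℝ ((⊤ : ℕ∞) : WithTop ℕ∞) χ)
    (h_zero : ∀ ξ, 2 * r < ‖ξ‖ → χ ξ = 0) : 𝓢(EuclideanSpace ℝ (Fin n), ℂ) :=
  HasCompactSupport.toSchwartzMap (f := fun ξ => (χ ξ : ℂ))
    (.of_support_subset_isCompact (isCompact_closedBall 0 (2 * r)) fun ξ hξ => by
      by_contra h
      rw [mem_closedBall_zero_iff, not_le] at h
      exact hξ (by simp only [h_zero ξ h, ofReal_zero]))
    (ofRealCLM.contDiff.comp h_smooth)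

theorem cutoffSymbol_apply (h_smooth : ContDiff ℝ ((⊤ : ℕ∞) : WithTop ℕ∞) χ)
    (h_zero : ∀ ξ, 2 * r < ‖ξ‖ → χ ξ = 0) (ξ : EuclideanSpace ℝ (Fin n)) :
    cutoffSymbol h_smooth h_zero ξ = χ ξ := rfl

theorem isDyadicCutoff_cutoffSymbol (h_smooth : ContDiff ℝ ((⊤ : ℕ∞) : WithTop ℕ∞) χ)
    (hr : 0 < r) (h_one : ∀ ξ, ‖ξ‖ ≤ r → χ ξ = 1) (h_zero : ∀ ξ, 2 * r < ‖ξ‖ → χ ξ = 0) :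
    IsDyadicCutoff (cutoffSymbol h_smooth h_zero) r where
  pos := hr
  eq_one ξ h := by rw [cutoffSymbol_apply, h_one ξ h, ofReal_one]
  eq_zero ξ h := by rw [cutoffSymbol_apply, h_zero ξ h, ofReal_zero]

theorem Dproj_eq_dyadicBlock {m : 𝓢(EuclideanSpace ℝ (Fin n), ℂ)} (hm : ∀ ξ, m ξ = χ ξ) (j : ℤ)
    (f : 𝓢(EuclideanSpace ℝ (Fin n), ℂ)) : Dproj χ j f = dyadicBlock m j f := by
  rw [← FourierTransform.fourierInv_fourier_eq (F := 𝓢(EuclideanSpace ℝ (Fin n), ℂ))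
    (dyadicBlock m j f), SchwartzMap.fourierInv_coe, Dproj]
  congr 1
  funext ξ
  rw [fourier_dyadicBlock_apply, dyadicDilate_apply, dyadicDilate_apply, hm, hm, ofReal_sub,
    SchwartzMap.fourier_coe]

theorem besovNorm_eq_eLpNorm_besovSequence {m : 𝓢(EuclideanSpace ℝ (Fin n), ℂ)}
    (hm : ∀ ξ, m ξ = χ ξ) (s : ℝ) (p : ℝ≥0∞) {q : ℝ≥0∞} (hq : 1 ≤ q)
    (f : 𝓢(EuclideanSpace ℝ (Fin n), ℂ)) :
    besovNorm χ s p q f = eLpNorm (besovSequence m s p f) q .count := by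
  simp only [besovNorm, lqNorm_eq_eLpNorm_count hq, Dproj_eq_dyadicBlock hm]
  rfl

end CutoffFunction

theorem besov_holder_bilinear_estimate_general
    (n : ℕ) (hn : 1 ≤ n) (χ : EuclideanSpace ℝ (Fin n) → ℝ)
    (h_smooth : ContDiff ℝ ((⊤ : ℕ∞) : WithTop ℕ∞) χ) (r : ℝ) (hr : 0 < r)
    (h_one : ∀ ξ, ‖ξ‖ ≤ r → χ ξ = 1) (h_zero : ∀ ξ, 2 * r < ‖ξ‖ → χ ξ = 0)
    (s α β : ℝ) (hs : 0 < s) (hα : 0 < α) (hβ : 0 < β)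
    (p q p₁ p₂ p₃ p₄ q₁ q₂ q₃ q₄ : ℝ≥0∞) (hp : 1 ≤ p) (hq : 1 ≤ q)
    (hp12 : 1 / p = 1 / p₁ + 1 / p₂) (hp34 : 1 / p = 1 / p₃ + 1 / p₄)
    (hq12 : 1 / q = 1 / q₁ + 1 / q₂) (hq34 : 1 / q = 1 / q₃ + 1 / q₄) :
    ∃ C : ℝ≥0∞, 0 < C ∧ C < ∞ ∧
      ∀ f₁ f₂ : 𝓢(EuclideanSpace ℝ (Fin n), ℂ),
        besovNorm χ s p q (fun x => f₁ x * f₂ x) ≤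
          C * (besovNorm χ (s + α) p₁ q₁ ⇑f₁ * besovNorm χ (-α) p₂ q₂ ⇑f₂
            + besovNorm χ (-β) p₃ q₃ ⇑f₁ * besovNorm χ (s + β) p₄ q₄ ⇑f₂) := by
  have : Nonempty (Fin n) := ⟨⟨0, hn⟩⟩
  set m := cutoffSymbol h_smooth h_zero
  have hmχ : ∀ ξ, m ξ = χ ξ := cutoffSymbol_apply h_smooth h_zero
  have hm : IsDyadicCutoff m r := isDyadicCutoff_cutoffSymbol h_smooth hr h_one h_zero
  have hp₁₂ : ENNReal.HolderTriple p₁ p₂ p := ⟨by simpa only [one_div] using hp12.symm⟩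
  have hp₃₄ : ENNReal.HolderTriple p₃ p₄ p := ⟨by simpa only [one_div] using hp34.symm⟩
  have hq₁₂ : ENNReal.HolderTriple q₁ q₂ q := ⟨by simpa only [one_div] using hq12.symm⟩
  have hq₃₄ : ENNReal.HolderTriple q₃ q₄ q := ⟨by simpa only [one_div] using hq34.symm⟩
  have hq₁ : 1 ≤ q₁ := hq.trans (ENNReal.HolderTriple.le q₁ q₂ q)
  have hq₂ : 1 ≤ q₂ := hq.trans (ENNReal.HolderTriple.le q₂ q₁ q)
  have hq₃ : 1 ≤ q₃ := hq.trans (ENNReal.HolderTriple.le q₃ q₄ q)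
  have hq₄ : 1 ≤ q₄ := hq.trans (ENNReal.HolderTriple.le q₄ q₃ q)
  obtain ⟨C, hC_pos, hC_top, hC⟩ :=
    hm.exists_eLpNorm_besovSequence_schwartzMul_le (p₁ := p₁) (p₂ := p₂) (p₃ := p₃) (p₄ := p₄)
      (q₁ := q₁) (q₂ := q₂) (q₃ := q₃) (q₄ := q₄) hp hq hs hα hβ
  refine ⟨C, hC_pos, hC_top, fun f₁ f₂ => ?_⟩
  have h_mul : (fun x => f₁ x * f₂ x) = schwartzMul f₁ f₂ := rfl
  rw [h_mul, besovNorm_eq_eLpNorm_besovSequence hmχ s p hq,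
    besovNorm_eq_eLpNorm_besovSequence hmχ _ p₁ hq₁,
    besovNorm_eq_eLpNorm_besovSequence hmχ _ p₂ hq₂,
    besovNorm_eq_eLpNorm_besovSequence hmχ _ p₃ hq₃,
    besovNorm_eq_eLpNorm_besovSequence hmχ _ p₄ hq₄]
  exact hC f₁ f₂

/-- **Hölder-type bilinear estimate in homogeneous Besov spaces** (Lemma 2.1).
For `s > 0`, `α, β > 0` and Hölder-related indices `p, pᵢ, q, qᵢ ∈ [1,∞]`, there is a
constant `C`, depending only on `n`, `χ`, `s`, `α`, `β` and the indices, such that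
`‖f₁ f₂‖_{Ḃ^s_{p,q}} ≤ C (‖f₁‖_{Ḃ^{s+α}_{p₁,q₁}} ‖f₂‖_{Ḃ^{-α}_{p₂,q₂}} +
‖f₁‖_{Ḃ^{-β}_{p₃,q₃}} ‖f₂‖_{Ḃ^{s+β}_{p₄,q₄}})` for all Schwartz functions `f₁, f₂`. -/
theorem besov_holder_bilinear_estimate
    (n : ℕ) (hn : 1 ≤ n) (χ : EuclideanSpace ℝ (Fin n) → ℝ) (hχ : IsLPCutoff χ)
    (s α β : ℝ) (hs : 0 < s) (hα : 0 < α) (hβ : 0 < β)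
    (p q p₁ p₂ p₃ p₄ q₁ q₂ q₃ q₄ : ℝ≥0∞)
    (hp : 1 ≤ p) (hq : 1 ≤ q)
    (hp₁ : 1 ≤ p₁) (hp₂ : 1 ≤ p₂) (hp₃ : 1 ≤ p₃) (hp₄ : 1 ≤ p₄)
    (hq₁ : 1 ≤ q₁) (hq₂ : 1 ≤ q₂) (hq₃ : 1 ≤ q₃) (hq₄ : 1 ≤ q₄)
    (hp12 : 1 / p = 1 / p₁ + 1 / p₂) (hp34 : 1 / p = 1 / p₃ + 1 / p₄)
    (hq12 : 1 / q = 1 / q₁ + 1 / q₂) (hq34 : 1 / q = 1 / q₃ + 1 / q₄) :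
    ∃ C : ℝ≥0∞, 0 < C ∧ C < ∞ ∧
      ∀ f₁ f₂ : 𝓢(EuclideanSpace ℝ (Fin n), ℂ),
        besovNorm χ s p q (fun x => f₁ x * f₂ x) ≤
          C * (besovNorm χ (s + α) p₁ q₁ ⇑f₁ * besovNorm χ (-α) p₂ q₂ ⇑f₂
            + besovNorm χ (-β) p₃ q₃ ⇑f₁ * besovNorm χ (s + β) p₄ q₄ ⇑f₂) :=
  let ⟨h_smooth, _, _, _, _, h_one, h_zero⟩ := hχ
  besov_holder_bilinear_estimate_general n hn χ h_smooth (3 / 4) (by norm_num) h_one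
    (fun ξ hξ => h_zero ξ (by linarith)) s α β hs hα hβ p q p₁ p₂ p₃ p₄ q₁ q₂ q₃ q₄ hp hq
    hp12 hp34 hq12 hq34
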